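/- arXiv:2003.09102 — 2 statements merged into one kernel-verified Lean document; each statement's English description precedes it below -/
import Mathlib

section
/- There is an absolute constant K such that for every prime p ≥ 5 and every real X with p³ ≤ X, one has | |E_{p,0,0}(X)| − ((p⁸−1)/(p^{10}−1))·(4/ζ(10))·X^{5/6} | ≤ K·p·X^{1/2}, where E_{p,0,0}(X) is the set of (A,B) ∈ E(X) with p ∣ A and p ∣ B (equivalently, the curves y²=x³+Ax+B in the family with additive reduction at p) and ζ is the Riemann zeta function. -/
/-- Condition (M): for every prime `q`, `q⁴ ∣ A` implies `q⁶ ∤ B`. -/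
def CondM (A B : ℤ) : Prop := ∀ q : ℕ, q.Prime → (q : ℤ) ^ 4 ∣ A → ¬ (q : ℤ) ^ 6 ∣ B

/-- The family `E(X)`: pairs `(A,B)` with `4A³+27B² ≠ 0`, naive height at most `X`,
satisfying condition (M). -/
def Efam (X : ℝ) : Set (ℤ × ℤ) :=
  {AB | 4 * AB.1 ^ 3 + 27 * AB.2 ^ 2 ≠ 0 ∧ ((max (|AB.1| ^ 3) (AB.2 ^ 2) : ℤ) : ℝ) ≤ X ∧
        CondM AB.1 AB.2}

/-!
Möbius inversion over the `d` with `d⁴ ∣ A` and `d⁶ ∣ B` removes condition (M). For each `d`, the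
pairs in the box `|A| ≤ X^(1/3)`, `|B| ≤ X^(1/2)` that satisfy all divisibility conditions are
the points of a lattice: `p, d⁴ ∣ A` means `lcm p d⁴ ∣ A`, and likewise for `B` and `d⁶`. Their
number differs from area over covolume by `O(X^(1/2) / d²)` once the origin is left out, so the
errors can be summed over all `d`, however large. The densities `μ(d) / (lcm p d⁴ * lcm p d⁶)` sum
to `(p⁸ - 1) / (p¹⁰ - 1) / ζ(10)`. The singular pairs, at most one for each `B`, go into the error.
-/

open ArithmeticFunction Finset
open scoped ArithmeticFunction.Moebius

section MoebiusSeries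

theorem hasSum_moebius_div_pow {k : ℕ} (hk : 1 < k) :
    HasSum (fun n : ℕ => (μ n : ℝ) / (n : ℝ) ^ k) ((riemannZeta k).re)⁻¹ := by
  have hk' : 1 < (k : ℂ).re := by simpa using hk
  have hζ : riemannZeta k = ((riemannZeta k).re : ℂ) :=
    Complex.ext rfl (by simpa using riemannZeta_im_eq_zero_of_one_lt (x := k) (by simpa using hk))
  have hsum : HasSum (LSeries.term (fun n => (μ n : ℂ)) k) (riemannZeta k)⁻¹ := by
    rw [← LSeries_zeta_eq_riemannZeta hk',
      ← eq_inv_of_mul_eq_one_right (LSeries_zeta_mul_Lseries_moebius hk')]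
    exact (LSeriesSummable_moebius_iff.2 hk').LSeriesHasSum
  rw [← Complex.hasSum_ofReal, Complex.ofReal_inv, ← hζ]
  refine hsum.congr_fun fun n => ?_
  rcases eq_or_ne n 0 with rfl | hn
  · simp
  · simp [LSeries.term_of_ne_zero hn, Complex.cpow_natCast]

theorem moebius_prime_mul {p : ℕ} (hp : p.Prime) (n : ℕ) :
    μ (p * n) = if p ∣ n then 0 else -μ n := by
  split_ifs with h
  · refine moebius_eq_zero_of_not_squarefree fun hsq => hp.one_lt.ne' ?_
    exact Nat.isUnit_iff.1 (hsq p (mul_dvd_mul_left p h))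
  · rw [isMultiplicative_moebius.map_mul_of_coprime (hp.coprime_iff_not_dvd.2 h),
      moebius_apply_prime hp, neg_one_mul]

theorem hasSum_moebius_div_pow_of_not_dvd {p k : ℕ} (hp : p.Prime) (hk : 1 < k) :
    HasSum ({n : ℕ | ¬ p ∣ n}.indicator fun n => (μ n : ℝ) / (n : ℝ) ^ k)
      ((1 - ((p : ℝ) ^ k)⁻¹)⁻¹ * ((riemannZeta k).re)⁻¹) := by
  have hS := hasSum_moebius_div_pow hk
  set f : ℕ → ℝ := fun n => (μ n : ℝ) / (n : ℝ) ^ k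
  set g : ℕ → ℝ := {n : ℕ | ¬ p ∣ n}.indicator f with hg
  set S := ((riemannZeta k).re)⁻¹
  obtain ⟨T, hT⟩ : Summable g := hS.summable.indicator _
  have hdvd : HasSum (fun n => f (p * n)) (S - T) := by
    refine ((mul_right_injective₀ hp.ne_zero).hasSum_iff fun n hn => ?_).2 (hS.sub hT) |>.congr_fun
      fun n => ?_
    · have : ¬ p ∣ n := fun ⟨e, he⟩ => hn ⟨e, he.symm⟩
      simp [hg, this]
    · simp [hg]
  have hmul : ∀ n, f (p * n) = -((p : ℝ) ^ k)⁻¹ * g n := fun n => by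
    by_cases h : p ∣ n
    · simp [f, hg, h, moebius_prime_mul hp]
    · simp only [f, hg, moebius_prime_mul hp, h, if_false, Set.indicator, Set.mem_ofPred_eq,
        not_false_eq_true, if_true, Int.cast_neg, Nat.cast_mul, mul_pow]
      ring
  have hST : S - T = -((p : ℝ) ^ k)⁻¹ * T := by
    simp only [hmul] at hdvd
    exact hdvd.unique (hT.mul_left _)
  have hne : 1 - ((p : ℝ) ^ k)⁻¹ ≠ 0 :=
    (sub_pos.2 (inv_lt_one_of_one_lt₀
      (one_lt_pow₀ (by exact_mod_cast hp.one_lt) (by omega)))).ne'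
  rwa [show S = (1 - ((p : ℝ) ^ k)⁻¹) * T by linear_combination hST, inv_mul_cancel_left₀ hne]

theorem hasSum_moebius_div_lcm_pow {p i j : ℕ} (hp : p.Prime) (hi : i ≠ 0) (hj : j ≠ 0) :
    HasSum (fun d : ℕ => (μ d : ℝ) / ((p.lcm (d ^ i) : ℝ) * (p.lcm (d ^ j) : ℝ)))
      (((p : ℝ) ^ (i + j - 2) - 1) / ((p : ℝ) ^ (i + j) - 1)
        * ((riemannZeta ((i + j : ℕ) : ℂ)).re)⁻¹) := by
  have hk : 1 < i + j := by omega
  have hp0 : (p : ℝ) ≠ 0 := by exact_mod_cast hp.ne_zero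
  have hp1 : (p : ℝ) ^ (i + j) - 1 ≠ 0 :=
    (sub_pos.2 (one_lt_pow₀ (by exact_mod_cast hp.one_lt) (by omega))).ne'
  have hS := hasSum_moebius_div_pow hk
  have hT := hasSum_moebius_div_pow_of_not_dvd hp hk
  convert! (hT.mul_left ((p : ℝ) ^ 2)⁻¹).add (hS.sub hT) using 1
  · ext d
    by_cases h : p ∣ d
    · simp [h, Nat.lcm_eq_right (dvd_pow h hi), Nat.lcm_eq_right (dvd_pow h hj), pow_add]
    · have hc : p.Coprime d := hp.coprime_iff_not_dvd.2 h
      simp only [(hc.pow_right i).lcm_eq_mul, (hc.pow_right j).lcm_eq_mul, Set.indicator, h,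
        Set.mem_ofPred_eq, not_false_eq_true, if_true, Nat.cast_mul, Nat.cast_pow]
      ring
  · obtain ⟨k, hk⟩ : ∃ k, i + j = k + 2 := Nat.exists_eq_add_of_le' hk
    rw [hk] at hp1 ⊢
    rw [Nat.add_sub_cancel]
    field_simp
    ring

end MoebiusSeries

section MoebiusInversion

theorem hasSum_moebius_of_dvd {n : ℕ} (hn : n ≠ 0) :
    HasSum (fun d : ℕ => if d ∣ n then (μ d : ℝ) else 0) (if n = 1 then 1 else 0) := by
  have hsum : ∑ d ∈ n.divisors, (μ d : ℝ) = if n = 1 then 1 else 0 := by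
    rw [← one_apply, ← coe_zeta_mul_coe_moebius, coe_zeta_mul_apply]
    rfl
  rw [← hsum, sum_congr rfl fun d hd => (if_pos (Nat.dvd_of_mem_divisors hd)).symm]
  exact hasSum_sum_of_ne_finset_zero fun d hd => if_neg fun h => hd (Nat.mem_divisors.2 ⟨h, hn⟩)

theorem pow_dvd_and_pow_dvd_iff_dvd_gcd_floorRoot (i j d : ℕ) (A B : ℤ) :
    (d : ℤ) ^ i ∣ A ∧ (d : ℤ) ^ j ∣ B ↔
      d ∣ (Nat.floorRoot i A.natAbs).gcd (Nat.floorRoot j B.natAbs) := by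
  rw [Nat.dvd_gcd_iff, ← Nat.pow_dvd_iff_dvd_floorRoot, ← Nat.pow_dvd_iff_dvd_floorRoot,
    ← Int.natCast_dvd, ← Int.natCast_dvd, Nat.cast_pow, Nat.cast_pow]

theorem condM_iff_gcd_floorRoot_eq_one (A B : ℤ) :
    CondM A B ↔ (Nat.floorRoot 4 A.natAbs).gcd (Nat.floorRoot 6 B.natAbs) = 1 := by
  simp only [CondM, Nat.eq_one_iff_not_exists_prime_dvd,
    ← pow_dvd_and_pow_dvd_iff_dvd_gcd_floorRoot, not_and]

open Classical in
theorem hasSum_moebius_condM {x : ℤ × ℤ} (hx : x ≠ 0) :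
    HasSum (fun d : ℕ => if (d : ℤ) ^ 4 ∣ x.1 ∧ (d : ℤ) ^ 6 ∣ x.2 then (μ d : ℝ) else 0)
      (if CondM x.1 x.2 then 1 else 0) := by
  have hgcd : (Nat.floorRoot 4 x.1.natAbs).gcd (Nat.floorRoot 6 x.2.natAbs) ≠ 0 := by
    simpa [Nat.gcd_eq_zero_iff, Prod.ext_iff] using hx
  simpa only [pow_dvd_and_pow_dvd_iff_dvd_gcd_floorRoot, condM_iff_gcd_floorRoot_eq_one]
    using hasSum_moebius_of_dvd hgcd

open Classical in
theorem hasSum_moebius_mul_card {s : Finset (ℤ × ℤ)} (hs : 0 ∉ s) :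
    HasSum (fun d : ℕ => (μ d : ℝ) * #{x ∈ s | (d : ℤ) ^ 4 ∣ x.1 ∧ (d : ℤ) ^ 6 ∣ x.2})
      #{x ∈ s | CondM x.1 x.2} := by
  simp only [card_filter, Nat.cast_sum, Nat.cast_ite, Nat.cast_one, Nat.cast_zero, mul_sum,
    mul_ite, mul_one, mul_zero]
  exact hasSum_sum fun x hx => hasSum_moebius_condM (ne_of_mem_of_not_mem hx hs)

end MoebiusInversion

section LatticePoints

theorem mem_Icc_neg_floor_iff {a : ℝ} {x : ℤ} : x ∈ Icc (-⌊a⌋) ⌊a⌋ ↔ |(x : ℝ)| ≤ a := by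
  rw [mem_Icc, ← abs_le, Int.le_floor, Int.cast_abs]

/-- The multiples of `m` in the interval `[-a, a]`. -/
noncomputable def symmMultiples (a : ℝ) (m : ℕ) : Finset ℤ :=
  {x ∈ Icc (-⌊a⌋) ⌊a⌋ | (m : ℤ) ∣ x}

theorem mem_symmMultiples {a : ℝ} {m : ℕ} {x : ℤ} :
    x ∈ symmMultiples a m ↔ |(x : ℝ)| ≤ a ∧ (m : ℤ) ∣ x := by
  rw [symmMultiples, mem_filter, mem_Icc_neg_floor_iff]

theorem card_symmMultiples {a : ℝ} {m : ℕ} (ha : 0 ≤ a) (hm : 0 < m) :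
    (#(symmMultiples a m) : ℝ) = 2 * ⌊a / m⌋ + 1 := by
  have hm' : (0 : ℝ) < m := by exact_mod_cast hm
  have hfloor : 0 ≤ ⌊a / m⌋ := by positivity
  have himage : symmMultiples a m = (Icc (-⌊a / m⌋) ⌊a / m⌋).image ((m : ℤ) * ·) := by
    ext x
    simp only [mem_symmMultiples, mem_image, mem_Icc_neg_floor_iff, le_div_iff₀ hm']
    constructor
    · rintro ⟨hx, t, rfl⟩
      exact ⟨t, by simpa [abs_mul, mul_comm] using hx, rfl⟩
    · rintro ⟨t, ht, rfl⟩
      exact ⟨by simpa [abs_mul, mul_comm] using ht, dvd_mul_right _ _⟩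
  have hcard : (#(symmMultiples a m) : ℤ) = 2 * ⌊a / m⌋ + 1 := by
    rw [himage, card_image_of_injective _ (mul_right_injective₀ (by exact_mod_cast hm.ne')),
      Int.card_Icc_of_le _ _ (by omega)]
    ring
  exact_mod_cast hcard

/-- The nonzero points `(A, B)` of the lattice `mℤ × nℤ` with `|A| ≤ U` and `|B| ≤ V`. -/
noncomputable def puncturedBox (U V : ℝ) (m n : ℕ) : Finset (ℤ × ℤ) :=
  (symmMultiples U m ×ˢ symmMultiples V n).erase 0

theorem mem_puncturedBox {U V : ℝ} {m n : ℕ} {x : ℤ × ℤ} :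
    x ∈ puncturedBox U V m n ↔
      x ≠ 0 ∧ (|(x.1 : ℝ)| ≤ U ∧ (m : ℤ) ∣ x.1) ∧ |(x.2 : ℝ)| ≤ V ∧ (n : ℤ) ∣ x.2 := by
  rw [puncturedBox, mem_erase, mem_product, mem_symmMultiples, mem_symmMultiples]

theorem zero_notMem_puncturedBox (U V : ℝ) (m n : ℕ) : 0 ∉ puncturedBox U V m n :=
  notMem_erase _ _

theorem filter_dvd_puncturedBox (U V : ℝ) (m n a b : ℕ) :
    {x ∈ puncturedBox U V m n | (a : ℤ) ∣ x.1 ∧ (b : ℤ) ∣ x.2} =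
      puncturedBox U V (m.lcm a) (n.lcm b) := by
  ext x
  simp only [mem_filter, mem_puncturedBox, Int.natCast_dvd, Nat.lcm_dvd_iff]
  tauto

theorem card_puncturedBox {U V : ℝ} {m n : ℕ} (hU : 0 ≤ U) (hV : 0 ≤ V) (hm : 0 < m) (hn : 0 < n) :
    (#(puncturedBox U V m n) : ℝ) = (2 * ⌊U / m⌋ + 1) * (2 * ⌊V / n⌋ + 1) - 1 := by
  have hzero : (0 : ℤ × ℤ) ∈ symmMultiples U m ×ˢ symmMultiples V n := by
    simp [mem_symmMultiples, hU, hV]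
  rw [puncturedBox, cast_card_erase_of_mem hzero, card_product, Nat.cast_mul,
    card_symmMultiples hU hm, card_symmMultiples hV hn]

theorem abs_two_mul_floor_add_one_mul_sub_one_sub_le {x y : ℝ} (hx : 0 ≤ x) (hy : 0 ≤ y) :
    |((2 * ⌊x⌋ + 1) * (2 * ⌊y⌋ + 1) - 1) - 4 * (x * y)| ≤ 2 * (x + y) := by
  have hfx := Int.floor_le x
  have hfy := Int.floor_le y
  have hmul : (⌊x⌋ * ⌊y⌋ : ℝ) ≤ x * y := mul_le_mul hfx hfy (by positivity) hx
  have hfx_lt : 0 ≤ (y + ⌊y⌋) * (⌊x⌋ + 1 - x) :=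
    mul_nonneg (by positivity) (sub_nonneg.2 (Int.lt_floor_add_one x).le)
  have hfy_lt : 0 ≤ (x + ⌊x⌋) * (⌊y⌋ + 1 - y) :=
    mul_nonneg (by positivity) (sub_nonneg.2 (Int.lt_floor_add_one y).le)
  rw [abs_le]
  constructor <;> linarith

theorem abs_card_puncturedBox_sub_le {U V : ℝ} {m n : ℕ} (hU : 0 ≤ U) (hV : 0 ≤ V) (hm : 0 < m)
    (hn : 0 < n) :
    |(#(puncturedBox U V m n) : ℝ) - 4 * (U / m * (V / n))| ≤ 2 * (U / m + V / n) := by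
  rw [card_puncturedBox hU hV hm hn]
  exact abs_two_mul_floor_add_one_mul_sub_one_sub_le (by positivity) (by positivity)

theorem div_lcm_pow_le {U : ℝ} {m d k : ℕ} (hU : 0 ≤ U) (hm : 0 < m) (hd : 0 < d) (hk : 2 ≤ k) :
    U / (m.lcm (d ^ k) : ℝ) ≤ U * (1 / (d : ℝ) ^ 2) := by
  have hle : d ^ 2 ≤ m.lcm (d ^ k) :=
    (Nat.pow_le_pow_right hd hk).trans
      (Nat.le_of_dvd (Nat.lcm_pos hm (by positivity)) (Nat.dvd_lcm_right _ _))
  rw [mul_one_div]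
  gcongr
  exact_mod_cast hle

open Classical in
theorem abs_card_condM_puncturedBox_sub_le {U V c : ℝ} {m n : ℕ} (hU : 0 ≤ U) (hV : 0 ≤ V)
    (hm : 0 < m) (hn : 0 < n)
    (hc : HasSum (fun d : ℕ => (μ d : ℝ) / ((m.lcm (d ^ 4) : ℝ) * (n.lcm (d ^ 6) : ℝ))) c) :
    |(#{x ∈ puncturedBox U V m n | CondM x.1 x.2} : ℝ) - 4 * (U * V) * c| ≤
      2 * (U + V) * (Real.pi ^ 2 / 6) := by
  have hcount := hasSum_moebius_mul_card (zero_notMem_puncturedBox U V m n)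
  refine (hcount.sub (hc.mul_left (4 * (U * V)))).norm_le_of_bounded
    (hasSum_zeta_two.mul_left (2 * (U + V))) fun d => ?_
  rcases d.eq_zero_or_pos with rfl | hd
  · simp
  have hμ : |(μ d : ℝ)| ≤ 1 := by exact_mod_cast abs_moebius_le_one (n := d)
  have hlattice := abs_card_puncturedBox_sub_le hU hV (Nat.lcm_pos hm (pow_pos hd 4))
    (Nat.lcm_pos hn (pow_pos hd 6))
  have hfilter := filter_dvd_puncturedBox U V m n (d ^ 4) (d ^ 6)
  push_cast at hfilter
  rw [hfilter]
  set N := (#(puncturedBox U V (m.lcm (d ^ 4)) (n.lcm (d ^ 6))) : ℝ)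
  set a := (m.lcm (d ^ 4) : ℝ)
  set b := (n.lcm (d ^ 6) : ℝ)
  calc ‖(μ d : ℝ) * N - 4 * (U * V) * ((μ d : ℝ) / (a * b))‖
      = |(μ d : ℝ)| * |N - 4 * (U / a * (V / b))| := by
        rw [Real.norm_eq_abs, ← abs_mul]
        congr 1
        ring
    _ ≤ 1 * (2 * (U / a + V / b)) := by gcongr
    _ ≤ 1 * (2 * (U * (1 / (d : ℝ) ^ 2) + V * (1 / (d : ℝ) ^ 2))) := by
        gcongr
        · exact div_lcm_pow_le hU hm hd (by norm_num)
        · exact div_lcm_pow_le hV hn hd (by norm_num)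
    _ = 2 * (U + V) * (1 / (d : ℝ) ^ 2) := by ring

end LatticePoints

section Curves

theorem injOn_snd_singular :
    Set.InjOn Prod.snd {x : ℤ × ℤ | 4 * x.1 ^ 3 + 27 * x.2 ^ 2 = 0} := by
  intro x hx y hy hxy
  simp only [Set.mem_ofPred_eq] at hx hy
  rw [hxy] at hx
  exact Prod.ext ((Odd.strictMono_pow (by decide : Odd 3)).injective (by linarith)) hxy

theorem card_singular_puncturedBox_le {U V : ℝ} {m n : ℕ} (hV : 0 ≤ V) (hn : 0 < n) :
    (#{x ∈ puncturedBox U V m n | 4 * x.1 ^ 3 + 27 * x.2 ^ 2 = 0} : ℝ) ≤ 2 * (V / n) + 1 := by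
  have hle : #{x ∈ puncturedBox U V m n | 4 * x.1 ^ 3 + 27 * x.2 ^ 2 = 0} ≤
      #(symmMultiples V n) := by
    refine card_le_card_of_injOn Prod.snd (fun x hx => ?_)
      (injOn_snd_singular.mono fun x hx => (mem_filter.1 hx).2)
    exact mem_symmMultiples.2 (mem_puncturedBox.1 (mem_filter.1 hx).1).2.2
  calc _ ≤ (#(symmMultiples V n) : ℝ) := by exact_mod_cast hle
    _ = 2 * ⌊V / n⌋ + 1 := card_symmMultiples hV hn
    _ ≤ 2 * (V / n) + 1 := by gcongr; exact Int.floor_le _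

theorem pow_le_iff_le_rpow_one_div {a X : ℝ} {k : ℕ} (ha : 0 ≤ a) (hX : 0 ≤ X) (hk : k ≠ 0) :
    a ^ k ≤ X ↔ a ≤ X ^ (1 / (k : ℝ)) := by
  rw [one_div, Real.le_rpow_inv_iff_of_pos ha hX (by positivity), Real.rpow_natCast]

theorem height_le_iff {X : ℝ} (hX : 0 ≤ X) (A B : ℤ) :
    ((max (|A| ^ 3) (B ^ 2) : ℤ) : ℝ) ≤ X ↔
      |(A : ℝ)| ≤ X ^ ((1 : ℝ) / 3) ∧ |(B : ℝ)| ≤ X ^ ((1 : ℝ) / 2) := by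
  rw [← sq_abs B]
  push_cast
  rw [max_le_iff, pow_le_iff_le_rpow_one_div (abs_nonneg _) hX three_ne_zero,
    pow_le_iff_le_rpow_one_div (abs_nonneg _) hX two_ne_zero]
  norm_cast

open Classical in
theorem Efam_dvd_eq_filter_puncturedBox {X : ℝ} (hX : 0 ≤ X) (m n : ℕ) :
    {AB ∈ Efam X | (m : ℤ) ∣ AB.1 ∧ (n : ℤ) ∣ AB.2} =
      ({x ∈ {x ∈ puncturedBox (X ^ ((1 : ℝ) / 3)) (X ^ ((1 : ℝ) / 2)) m n | CondM x.1 x.2} |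
        ¬ 4 * x.1 ^ 3 + 27 * x.2 ^ 2 = 0} : Finset (ℤ × ℤ)) := by
  ext x
  have hne : 4 * x.1 ^ 3 + 27 * x.2 ^ 2 ≠ 0 → x ≠ 0 := by
    rintro h rfl
    simp at h
  simp only [Efam, Set.mem_ofPred_eq, height_le_iff hX, coe_filter, mem_filter, mem_puncturedBox]
  tauto

theorem abs_ncard_Efam_dvd_sub_le {X c : ℝ} {m n : ℕ} (hX : 1 ≤ X) (hm : 0 < m) (hn : 0 < n)
    (hc : HasSum (fun d : ℕ => (μ d : ℝ) / ((m.lcm (d ^ 4) : ℝ) * (n.lcm (d ^ 6) : ℝ))) c) :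
    |({AB ∈ Efam X | (m : ℤ) ∣ AB.1 ∧ (n : ℤ) ∣ AB.2}.ncard : ℝ) - 4 * X ^ ((5 : ℝ) / 6) * c| ≤
      (4 * (Real.pi ^ 2 / 6) + 3) * X ^ ((1 : ℝ) / 2) := by
  classical
  have hX0 : 0 < X := by linarith
  set U := X ^ ((1 : ℝ) / 3) with hU
  set V := X ^ ((1 : ℝ) / 2) with hV
  have hUV : U ≤ V := Real.rpow_le_rpow_of_exponent_le hX (by norm_num)
  have hV1 : 1 ≤ V := Real.one_le_rpow hX (by norm_num)
  have harea : U * V = X ^ ((5 : ℝ) / 6) := by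
    rw [hU, hV, ← Real.rpow_add hX0]
    norm_num
  rw [Efam_dvd_eq_filter_puncturedBox hX0.le, Set.ncard_coe_finset, ← harea]
  set C := {x ∈ puncturedBox U V m n | CondM x.1 x.2} 
  have hcount : |(#C : ℝ) - 4 * (U * V) * c| ≤ 2 * (U + V) * (Real.pi ^ 2 / 6) :=
    abs_card_condM_puncturedBox_sub_le (by positivity) (by positivity) hm hn hc
  have hsplit : (#{x ∈ C | 4 * x.1 ^ 3 + 27 * x.2 ^ 2 = 0} : ℝ) +
      #{x ∈ C | ¬ 4 * x.1 ^ 3 + 27 * x.2 ^ 2 = 0} = #C := by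
    exact_mod_cast card_filter_add_card_filter_not _
  have hsingular : (#{x ∈ C | 4 * x.1 ^ 3 + 27 * x.2 ^ 2 = 0} : ℝ) ≤ 3 * V := by
    calc _ ≤ (#{x ∈ puncturedBox U V m n | 4 * x.1 ^ 3 + 27 * x.2 ^ 2 = 0} : ℝ) := by
          exact_mod_cast card_le_card (filter_subset_filter _ (filter_subset _ _))
      _ ≤ 2 * (V / n) + 1 := card_singular_puncturedBox_le (by positivity) hn
      _ ≤ 2 * V + V := by
          gcongr
          exact div_le_self (by positivity) (by exact_mod_cast hn)
      _ = 3 * V := by ring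
  have hbox : 2 * (U + V) * (Real.pi ^ 2 / 6) ≤ 2 * (V + V) * (Real.pi ^ 2 / 6) := by gcongr
  have hnonneg : (0 : ℝ) ≤ #{x ∈ C | 4 * x.1 ^ 3 + 27 * x.2 ^ 2 = 0} := Nat.cast_nonneg _
  rw [abs_le] at hcount ⊢
  constructor <;> linarith [hcount.1, hcount.2]

theorem stmt_4_general :
    ∃ K : ℝ, 0 < K ∧ ∀ p : ℕ, p.Prime → ∀ X : ℝ, 1 ≤ X →
      |({AB ∈ Efam X | (p : ℤ) ∣ AB.1 ∧ (p : ℤ) ∣ AB.2}.ncard : ℝ)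
          - (((p : ℝ) ^ 8 - 1) / ((p : ℝ) ^ 10 - 1)) * (4 / (riemannZeta 10).re)
            * X ^ ((5 : ℝ) / 6)|
        ≤ K * X ^ ((1 : ℝ) / 2) := by
  refine ⟨4 * (Real.pi ^ 2 / 6) + 3, by positivity, fun p hp X hX => ?_⟩
  have hdensity : HasSum (fun d : ℕ => (μ d : ℝ) / ((p.lcm (d ^ 4) : ℝ) * (p.lcm (d ^ 6) : ℝ)))
      (((p : ℝ) ^ 8 - 1) / ((p : ℝ) ^ 10 - 1) * ((riemannZeta 10).re)⁻¹) :=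
    hasSum_moebius_div_lcm_pow hp (i := 4) (j := 6) four_ne_zero (by norm_num)
  convert! abs_ncard_Efam_dvd_sub_le hX hp.pos hp.pos hdensity using 3
  ring

end Curves

theorem stmt_4 :
    ∃ K : ℝ, 0 < K ∧ ∀ (p : ℕ), p.Prime → 5 ≤ p → ∀ (X : ℝ), (p : ℝ) ^ 3 ≤ X →
      |({AB ∈ Efam X | (p : ℤ) ∣ AB.1 ∧ (p : ℤ) ∣ AB.2}.ncard : ℝ)
          - (((p : ℝ) ^ 8 - 1) / ((p : ℝ) ^ 10 - 1)) * (4 / (riemannZeta 10).re)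
            * X ^ ((5 : ℝ) / 6)|
        ≤ K * (p : ℝ) * X ^ ((1 : ℝ) / 2) := by
  obtain ⟨K, hK, h⟩ := stmt_4_general
  refine ⟨K, hK, fun p hp _ X hX => ?_⟩
  have hp1 : (1 : ℝ) ≤ p := by exact_mod_cast hp.one_le
  have hX1 : 1 ≤ X := (one_le_pow₀ hp1).trans hX
  refine (h p hp X hX1).trans ?_
  gcongr
  exact le_mul_of_one_le_right hK.le hp1
end

section
/- There is an absolute constant K such that for every prime p ≥ 5 and every real X with p³ ≤ X, the number of pairs (A,B) ∈ E(X) with p ∤ 4A³+27B² (i.e. the elliptic curves y² = x³+Ax+B in the family with good reduction at p) differs from ((p²−p)/p²)·(p^{10}/(p^{10}−1))·(4/ζ(10))·X^{5/6} by at most K·p·X^{1/2}, where ζ is the Riemann zeta function. -/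
/-!
Sieve over the weighted greatest common divisor of `(A, B)`, the largest `D` with `D⁴ ∣ A` and
`D⁶ ∣ B`: condition (M) says `D = 1`, which Möbius inversion detects. Writing `X = t⁶`, the pairs
with `p ∤ 4A³ + 27B²` divisible in the weighted sense by `d` are, for `p ∤ d`, a copy of the same
set at scale `t / d²`, and there are none for `p ∣ d`. The cubic `4r³ + 27s² = 0` is cuspidal, so
it has exactly `p` points over `𝔽_p`; hence a box at scale `t` contains
`4 (1 - 1/p) t⁵ + O(p t³)` such pairs. For `t < 1` there are none at all, so this estimate holds
uniformly in `t ≥ 0` and can be summed over all `d`, the error terms being a multiple of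
`∑ p t³ / d⁶`.
-/

open Finset
open scoped ArithmeticFunction.Moebius

section CuspidalCubic

variable {F : Type*} [Field F] [Fintype F] [DecidableEq F]

theorem card_filter_mul_cube_add_mul_sq_eq_zero {a b : F} (hab : a ≠ 0 ∨ b ≠ 0) :
    #{rs : F × F | a * rs.1 ^ 3 + b * rs.2 ^ 2 = 0} = Fintype.card F := by
  rw [← card_univ]
  rcases eq_or_ne a 0 with rfl | ha
  · have hb : b ≠ 0 := by simpa using hab
    refine card_nbij' (fun rs ↦ rs.1) (fun r ↦ (r, 0)) ?_ ?_ ?_ ?_ <;>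
      simp +contextual [Set.MapsTo, Set.LeftInvOn, hb]
  rcases eq_or_ne b 0 with rfl | hb
  · refine card_nbij' (fun rs ↦ rs.2) (fun s ↦ (0, s)) ?_ ?_ ?_ ?_ <;>
      simp +contextual [Set.MapsTo, Set.LeftInvOn, ha]
  -- On the cuspidal cubic, `t = -s / (a * r)` is a rational parameter.
  refine card_nbij' (fun rs ↦ -rs.2 / (a * rs.1)) (fun t ↦ (-(a * b * t ^ 2), a ^ 2 * b * t ^ 3))
    (fun _ _ ↦ by simp) (fun t _ ↦ ?_) ?_ (fun t _ ↦ ?_)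
  · simp only [coe_filter, mem_univ, true_and, Set.mem_ofPred_eq]
    ring
  · rintro ⟨r, s⟩ hrs
    simp only [coe_filter, mem_univ, true_and, Set.mem_ofPred_eq] at hrs
    rcases eq_or_ne r 0 with rfl | hr
    · have hs : s = 0 := by simpa [hb] using hrs
      simp [hs]
    · ext
      · simp only
        field_simp
        linear_combination -hrs
      · simp only
        field_simp
        linear_combination -s * hrs
  · rcases eq_or_ne t 0 with rfl | ht
    · simp
    · simp only
      field_simp

theorem card_filter_four_mul_cube_add_eq_zero :
    #{rs : F × F | 4 * rs.1 ^ 3 + 27 * rs.2 ^ 2 = 0} = Fintype.card F := by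
  refine card_filter_mul_cube_add_mul_sq_eq_zero ?_
  by_contra! h
  exact one_ne_zero (α := F) (by linear_combination 7 * h.1 - h.2)

end CuspidalCubic

section LatticePoints

theorem abs_card_Icc_ceil_floor_sub_le {x y : ℝ} (hxy : x ≤ y) :
    |(#(Icc ⌈x⌉ ⌊y⌋) : ℝ) - (y - x)| ≤ 1 := by
  have hfloor := Int.sub_one_lt_floor y
  have hceil := Int.ceil_lt_add_one x
  have hnonneg : 0 ≤ ⌊y⌋ + 1 - ⌈x⌉ := by
    have : (-1 : ℝ) < ⌊y⌋ + 1 - ⌈x⌉ := by linarith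
    have : (-1 : ℤ) < ⌊y⌋ + 1 - ⌈x⌉ := by exact_mod_cast this
    omega
  have hcard : (#(Icc ⌈x⌉ ⌊y⌋) : ℝ) = ⌊y⌋ + 1 - ⌈x⌉ := by
    exact_mod_cast (Int.card_Icc ⌈x⌉ ⌊y⌋).symm ▸ Int.toNat_of_nonneg hnonneg
  rw [hcard, abs_le]
  constructor <;> linarith [Int.floor_le y, Int.le_ceil x]

variable {n : ℕ}

theorem abs_card_filter_Icc_intCast_eq_sub_le [NeZero n] {x y : ℝ} (hxy : x ≤ y) (r : ZMod n) :
    |(#{a ∈ Icc ⌈x⌉ ⌊y⌋ | ((a : ℤ) : ZMod n) = r} : ℝ) - (y - x) / n| ≤ 1 := by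
  have hn : (0 : ℝ) < n := by exact_mod_cast NeZero.pos n
  obtain ⟨v, rfl⟩ := ZMod.intCast_surjective r
  have hset : ({a ∈ Icc ⌈x⌉ ⌊y⌋ | ((a : ℤ) : ZMod n) = v} : Finset ℤ) =
      (Icc ⌈(x - v) / n⌉ ⌊(y - v) / n⌋).image fun m ↦ v + n * m := by
    ext a
    simp only [mem_filter, mem_Icc, mem_image, Int.ceil_le, Int.le_floor, div_le_iff₀ hn,
      le_div_iff₀ hn]
    constructor
    · rintro ⟨⟨hxa, hay⟩, hav⟩
      obtain ⟨m, hm⟩ := (ZMod.intCast_eq_intCast_iff_dvd_sub v a n).mp hav.symm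
      obtain rfl : a = v + n * m := by linarith
      push_cast at hxa hay
      exact ⟨m, ⟨by linarith, by linarith⟩, rfl⟩
    · rintro ⟨m, ⟨hxm, hmy⟩, rfl⟩
      push_cast
      exact ⟨⟨by linarith, by linarith⟩, by simp⟩
  have hinj : Function.Injective fun m : ℤ ↦ v + n * m := fun m m' h ↦ by
    simpa [NeZero.ne n] using h
  have hlength : (y - x) / n = (y - v) / n - (x - v) / n := by ring
  rw [hset, card_image_of_injective _ hinj, hlength]
  exact abs_card_Icc_ceil_floor_sub_le (by gcongr)

theorem abs_mul_sub_mul_le_add {x y a b e : ℝ} (ha : 0 ≤ a) (hb : 0 ≤ b) (hx : |x - a| ≤ e)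
    (hy : |y - b| ≤ e) : |x * y - a * b| ≤ e * (a + b + e) := by
  have he : 0 ≤ e := (abs_nonneg _).trans hx
  calc |x * y - a * b| = |(x - a) * (y - b) + a * (y - b) + (x - a) * b| := by ring_nf
    _ ≤ |(x - a) * (y - b)| + |a * (y - b)| + |(x - a) * b| := abs_add_three _ _ _
    _ = |x - a| * |y - b| + a * |y - b| + |x - a| * b := by
      rw [abs_mul, abs_mul, abs_mul, abs_of_nonneg ha, abs_of_nonneg hb]
    _ ≤ e * e + a * e + e * b := by gcongr
    _ = e * (a + b + e) := by ring

/-- The integer points of the rectangle `[-U, U] × [-V, V]`. -/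
noncomputable def latticeBox (U V : ℝ) : Finset (ℤ × ℤ) :=
  Icc ⌈-U⌉ ⌊U⌋ ×ˢ Icc ⌈-V⌉ ⌊V⌋

theorem mem_latticeBox {U V : ℝ} {ab : ℤ × ℤ} :
    ab ∈ latticeBox U V ↔ |(ab.1 : ℝ)| ≤ U ∧ |(ab.2 : ℝ)| ≤ V := by
  simp only [latticeBox, mem_product, mem_Icc, Int.ceil_le, Int.le_floor, abs_le]

theorem card_filter_latticeBox_eq_sum (S : Finset (ZMod n × ZMod n)) (U V : ℝ) :
    #{ab ∈ latticeBox U V | ((ab.1 : ZMod n), (ab.2 : ZMod n)) ∈ S} =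
      ∑ rs ∈ S, #{a ∈ Icc ⌈-U⌉ ⌊U⌋ | ((a : ℤ) : ZMod n) = rs.1} *
        #{b ∈ Icc ⌈-V⌉ ⌊V⌋ | ((b : ℤ) : ZMod n) = rs.2} := by
  rw [← sum_card_fiberwise_eq_card_filter]
  refine sum_congr rfl fun rs _ ↦ ?_
  simp only [← card_product, ← filter_product, latticeBox, Prod.ext_iff]

theorem abs_card_filter_latticeBox_sub_le [NeZero n] (S : Finset (ZMod n × ZMod n)) {U V : ℝ}
    (hU : 0 ≤ U) (hV : 0 ≤ V) :
    |(#{ab ∈ latticeBox U V | ((ab.1 : ZMod n), (ab.2 : ZMod n)) ∈ S} : ℝ) -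
      #S * (2 * U / n * (2 * V / n))| ≤ #S * (2 * U / n + 2 * V / n + 1) := by
  have hcard {W : ℝ} (hW : 0 ≤ W) (r : ZMod n) :
      |(#{a ∈ Icc ⌈-W⌉ ⌊W⌋ | ((a : ℤ) : ZMod n) = r} : ℝ) - 2 * W / n| ≤ 1 := by
    have := abs_card_filter_Icc_intCast_eq_sub_le (neg_le_self hW) r
    rwa [sub_neg_eq_add, ← two_mul] at this
  rw [card_filter_latticeBox_eq_sum, Nat.cast_sum, ← nsmul_eq_mul, ← sum_const, ← sum_sub_distrib,
    ← nsmul_eq_mul]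
  refine (abs_sum_le_sum_abs _ _).trans (sum_le_card_nsmul _ _ _ fun rs _ ↦ ?_)
  rw [Nat.cast_mul, ← one_mul (2 * U / n + 2 * V / n + 1)]
  exact abs_mul_sub_mul_le_add (by positivity) (by positivity) (hcard hU _) (hcard hV _)

theorem abs_card_latticeBox_sub_le {U V : ℝ} (hU : 0 ≤ U) (hV : 0 ≤ V) :
    |(#(latticeBox U V) : ℝ) - 4 * (U * V)| ≤ 2 * U + 2 * V + 1 := by
  have := abs_card_filter_latticeBox_sub_le (n := 1) univ hU hV
  simp only [mem_univ, filter_true, card_univ, Fintype.card_prod, ZMod.card] at this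
  convert this using 2 <;> push_cast <;> ring

theorem natCast_dvd_four_mul_cube_add_iff [NeZero n] (ab : ℤ × ℤ) :
    (n : ℤ) ∣ 4 * ab.1 ^ 3 + 27 * ab.2 ^ 2 ↔ ((ab.1 : ZMod n), (ab.2 : ZMod n)) ∈
      ({rs | 4 * rs.1 ^ 3 + 27 * rs.2 ^ 2 = 0} : Finset (ZMod n × ZMod n)) := by
  rw [← ZMod.intCast_zmod_eq_zero_iff_dvd]
  simp

theorem abs_card_filter_dvd_latticeBox_sub_le {p : ℕ} (hp : p.Prime) {U V : ℝ} (hU : 0 ≤ U)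
    (hV : 0 ≤ V) :
    |(#{ab ∈ latticeBox U V | (p : ℤ) ∣ 4 * ab.1 ^ 3 + 27 * ab.2 ^ 2} : ℝ) - 4 * (U * V) / p| ≤
      2 * U + 2 * V + p := by
  have : Fact p.Prime := ⟨hp⟩
  have hp0 : (p : ℝ) ≠ 0 := by exact_mod_cast hp.ne_zero
  have := abs_card_filter_latticeBox_sub_le (n := p) {rs | 4 * rs.1 ^ 3 + 27 * rs.2 ^ 2 = 0} hU hV
  simp only [← natCast_dvd_four_mul_cube_add_iff, card_filter_four_mul_cube_add_eq_zero,
    ZMod.card] at this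
  convert this using 2 <;> field_simp
  ring

theorem abs_card_filter_not_dvd_latticeBox_sub_le {p : ℕ} (hp : p.Prime) {U V : ℝ} (hU : 0 ≤ U)
    (hV : 0 ≤ V) :
    |(#{ab ∈ latticeBox U V | ¬ (p : ℤ) ∣ 4 * ab.1 ^ 3 + 27 * ab.2 ^ 2} : ℝ) -
      4 * (1 - 1 / p) * (U * V)| ≤ 4 * U + 4 * V + 1 + p := by
  have hsplit : (#{ab ∈ latticeBox U V | ¬ (p : ℤ) ∣ 4 * ab.1 ^ 3 + 27 * ab.2 ^ 2} : ℝ) =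
      #(latticeBox U V) - #{ab ∈ latticeBox U V | (p : ℤ) ∣ 4 * ab.1 ^ 3 + 27 * ab.2 ^ 2} := by
    rw [eq_sub_iff_add_eq']
    exact_mod_cast card_filter_add_card_filter_not _
  have htotal := abs_le.mp (abs_card_latticeBox_sub_le hU hV)
  have hdvd := abs_le.mp (abs_card_filter_dvd_latticeBox_sub_le hp hU hV)
  have hmain : 4 * (1 - 1 / (p : ℝ)) * (U * V) = 4 * (U * V) - 4 * (U * V) / p := by ring
  rw [hsplit, hmain, abs_le]
  constructor <;> linarith

end LatticePoints

section GoodPairs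

/-- The integer pairs with `|a| ≤ t²`, `|b| ≤ t³` and `p ∤ 4a³ + 27b²`: the equations
`y² = x³ + ax + b` of naive height at most `t⁶`, minimal or not, that are nonsingular modulo `p`
(for `p ≠ 2`). -/
noncomputable def goodPairs (p : ℕ) (t : ℝ) : Finset (ℤ × ℤ) :=
  {ab ∈ latticeBox (t ^ 2) (t ^ 3) | ¬ (p : ℤ) ∣ 4 * ab.1 ^ 3 + 27 * ab.2 ^ 2}

theorem mem_goodPairs {p : ℕ} {t : ℝ} {ab : ℤ × ℤ} :
    ab ∈ goodPairs p t ↔ (|(ab.1 : ℝ)| ≤ t ^ 2 ∧ |(ab.2 : ℝ)| ≤ t ^ 3) ∧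
      ¬ (p : ℤ) ∣ 4 * ab.1 ^ 3 + 27 * ab.2 ^ 2 := by
  rw [goodPairs, mem_filter, mem_latticeBox]

variable {p : ℕ}

theorem goodPairs_eq_empty_of_lt_one {t : ℝ} (ht : 0 ≤ t) (ht1 : t < 1) : goodPairs p t = ∅ := by
  have eq_zero {a : ℤ} {k : ℕ} (hk : k ≠ 0) (ha : |(a : ℝ)| ≤ t ^ k) : a = 0 :=
    Int.abs_lt_one_iff.mp (by exact_mod_cast ha.trans_lt (pow_lt_one₀ ht ht1 hk))
  refine eq_empty_of_forall_notMem fun ⟨a, b⟩ hab ↦ ?_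
  obtain ⟨⟨ha, hb⟩, hdvd⟩ := mem_goodPairs.mp hab
  obtain rfl := eq_zero two_ne_zero ha
  obtain rfl := eq_zero three_ne_zero hb
  simp at hdvd

theorem abs_card_goodPairs_sub_le (hp : p.Prime) {t : ℝ} (ht : 0 ≤ t) :
    |(#(goodPairs p t) : ℝ) - 4 * (1 - 1 / p) * t ^ 5| ≤ 10 * p * t ^ 3 := by
  have hp1 : (1 : ℝ) ≤ p := by exact_mod_cast hp.one_le
  rcases lt_or_ge t 1 with ht1 | ht1
  · have hdensity : 1 - 1 / (p : ℝ) ∈ Set.Icc 0 1 :=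
      ⟨sub_nonneg.mpr (div_le_one_of_le₀ hp1 (by positivity)), sub_le_self _ (by positivity)⟩
    rw [goodPairs_eq_empty_of_lt_one ht ht1, card_empty, Nat.cast_zero, zero_sub, abs_neg,
      abs_of_nonneg (mul_nonneg (by linarith [hdensity.1]) (by positivity))]
    gcongr ?_ * ?_
    · linarith [hdensity.2]
    · exact pow_le_pow_of_le_one ht ht1.le (by norm_num)
  · have hcount := abs_card_filter_not_dvd_latticeBox_sub_le hp (pow_nonneg ht 2) (pow_nonneg ht 3)
    have hsq : t ^ 2 ≤ t ^ 3 := pow_le_pow_right₀ ht1 (by norm_num)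
    have hcube : 1 ≤ t ^ 3 := one_le_pow₀ ht1
    calc _ ≤ 4 * t ^ 2 + 4 * t ^ 3 + 1 + p := by rwa [← pow_add] at hcount
      _ ≤ 4 * (p * t ^ 3) + 4 * (p * t ^ 3) + p * t ^ 3 + p * t ^ 3 := by
        gcongr
        · exact hsq.trans (le_mul_of_one_le_left (by positivity) hp1)
        · exact le_mul_of_one_le_left (by positivity) hp1
        · exact one_le_mul_of_one_le_of_one_le hp1 hcube
        · exact le_mul_of_one_le_right (by positivity) hcube
      _ = 10 * p * t ^ 3 := by ring

end GoodPairs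

section WeightedGCD

/-- The largest `d` with `d⁴ ∣ A` and `d⁶ ∣ B`, or `0` if `A = B = 0`: the factor by which
`y² = x³ + Ax + B` can be scaled down to a minimal short Weierstrass equation. Here
`Nat.floorRoot k n` is the largest integer whose `k`-th power divides `n`. -/
def weightedGCD (A B : ℤ) : ℕ :=
  Nat.gcd (Nat.floorRoot 4 A.natAbs) (Nat.floorRoot 6 B.natAbs)

theorem dvd_weightedGCD_iff {d : ℕ} {A B : ℤ} :
    d ∣ weightedGCD A B ↔ (d : ℤ) ^ 4 ∣ A ∧ (d : ℤ) ^ 6 ∣ B := by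
  simp only [weightedGCD, Nat.dvd_gcd_iff, ← Nat.pow_dvd_iff_dvd_floorRoot, ← Int.natCast_dvd,
    Nat.cast_pow]

theorem condM_iff_weightedGCD_eq_one {A B : ℤ} : CondM A B ↔ weightedGCD A B = 1 := by
  simp only [CondM, Nat.eq_one_iff_not_exists_prime_dvd, dvd_weightedGCD_iff, not_and]

variable {p : ℕ} {t : ℝ}

theorem not_dvd_weightedGCD_of_mem_goodPairs {ab : ℤ × ℤ} (hab : ab ∈ goodPairs p t) :
    ¬ p ∣ weightedGCD ab.1 ab.2 := fun h ↦ by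
  obtain ⟨hA, hB⟩ := dvd_weightedGCD_iff.mp h
  have hpA : (p : ℤ) ∣ ab.1 := (dvd_pow_self _ four_ne_zero).trans hA
  have hpB : (p : ℤ) ∣ ab.2 := (dvd_pow_self _ (by norm_num)).trans hB
  exact (mem_goodPairs.mp hab).2
    (dvd_add ((dvd_pow hpA three_ne_zero).mul_left _) ((dvd_pow hpB two_ne_zero).mul_left _))

theorem mul_pow_mem_goodPairs_iff (hp : p.Prime) {d : ℕ} (hpd : ¬ p ∣ d) {a b : ℤ} :
    (d ^ 4 * a, d ^ 6 * b) ∈ goodPairs p t ↔ (a, b) ∈ goodPairs p (t / d ^ 2) := by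
  have hd : (0 : ℝ) < d := by
    exact_mod_cast Nat.pos_of_ne_zero (by rintro rfl; exact hpd (dvd_zero p))
  have hdisc : 4 * ((d : ℤ) ^ 4 * a) ^ 3 + 27 * ((d : ℤ) ^ 6 * b) ^ 2 =
      (d : ℤ) ^ 12 * (4 * a ^ 3 + 27 * b ^ 2) := by ring
  have hpd' : ¬ (p : ℤ) ∣ (d : ℤ) ^ 12 := fun h ↦
    hpd (by exact_mod_cast (Nat.prime_iff_prime_int.mp hp).dvd_of_dvd_pow h)
  simp only [mem_goodPairs, hdisc, (Nat.prime_iff_prime_int.mp hp).dvd_mul, hpd', false_or,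
    Int.cast_mul, Int.cast_pow, Int.cast_natCast, abs_mul, abs_pow, Nat.abs_cast, div_pow,
    ← pow_mul, le_div_iff₀' (pow_pos hd _)]

theorem card_filter_dvd_weightedGCD_goodPairs (hp : p.Prime) {d : ℕ} (hpd : ¬ p ∣ d) :
    #{ab ∈ goodPairs p t | d ∣ weightedGCD ab.1 ab.2} = #(goodPairs p (t / d ^ 2)) := by
  have hd : d ≠ 0 := by rintro rfl; exact hpd (dvd_zero p)
  have hinj : Function.Injective fun ab : ℤ × ℤ ↦ ((d : ℤ) ^ 4 * ab.1, (d : ℤ) ^ 6 * ab.2) :=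
    fun ab ab' h ↦ by simpa [hd, Prod.ext_iff] using h
  rw [← card_image_of_injective (goodPairs p (t / d ^ 2)) hinj]
  congr 1
  ext ⟨A, B⟩
  simp only [mem_filter, mem_image, Prod.mk.injEq, Prod.exists, dvd_weightedGCD_iff]
  constructor
  · rintro ⟨hab, ⟨a, rfl⟩, ⟨b, rfl⟩⟩
    exact ⟨a, b, (mul_pow_mem_goodPairs_iff hp hpd).mp hab, rfl, rfl⟩
  · rintro ⟨a, b, hab, rfl, rfl⟩
    exact ⟨(mul_pow_mem_goodPairs_iff hp hpd).mpr hab, dvd_mul_right _ _, dvd_mul_right _ _⟩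

end WeightedGCD

section Moebius

theorem hasSum_ite_dvd_moebius {D : ℕ} (hD : D ≠ 0) :
    HasSum (fun d : ℕ ↦ if d ∣ D then (μ d : ℝ) else 0) (if D = 1 then 1 else 0) := by
  have hsum : ∑ d ∈ D.divisors, μ d = if D = 1 then 1 else 0 := by
    rw [← ArithmeticFunction.coe_zeta_mul_apply, ArithmeticFunction.coe_zeta_mul_moebius,
      ArithmeticFunction.one_apply]
  have hsum' : ∑ d ∈ D.divisors, (if d ∣ D then (μ d : ℝ) else 0) = if D = 1 then 1 else 0 := by
    rw [sum_congr rfl fun d hd ↦ if_pos (Nat.dvd_of_mem_divisors hd)]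
    exact_mod_cast hsum
  rw [← hsum']
  exact hasSum_sum_of_ne_finset_zero fun d hd ↦
    if_neg fun hdvd ↦ hd (Nat.mem_divisors.mpr ⟨hdvd, hD⟩)

theorem hasSum_moebius_mul_card_filter_dvd {α : Type*} {T : Finset α} {g : α → ℕ}
    (hg : ∀ a ∈ T, g a ≠ 0) :
    HasSum (fun d : ℕ ↦ (μ d : ℝ) * #{a ∈ T | d ∣ g a}) #{a ∈ T | g a = 1} := by
  simp only [card_filter, Nat.cast_sum, mul_sum, Nat.cast_ite, Nat.cast_one, Nat.cast_zero, mul_ite,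
    mul_one, mul_zero]
  exact hasSum_sum fun a ha ↦ hasSum_ite_dvd_moebius (hg a ha)

/-- The coefficients `χ₀ μ` of the Dirichlet series inverse to `L(χ₀, s)`, where `χ₀` is the
principal character modulo `N`. -/
def coprimeMoebius (N d : ℕ) : ℤ := if d.Coprime N then μ d else 0

theorem abs_coprimeMoebius_le_one (N d : ℕ) : |coprimeMoebius N d| ≤ 1 := by
  unfold coprimeMoebius
  split_ifs
  exacts [ArithmeticFunction.abs_moebius_le_one, zero_le_one]

theorem one_mul_moebius_eq_coprimeMoebius (N : ℕ) :
    ((fun d : ℕ ↦ (1 : DirichletCharacter ℂ N) d) * fun d ↦ (μ d : ℂ)) =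
      fun d ↦ (coprimeMoebius N d : ℂ) := by
  ext d
  by_cases hd : d.Coprime N
  · simp [coprimeMoebius, hd, MulChar.one_apply ((ZMod.isUnit_iff_coprime d N).mpr hd)]
  · simp [coprimeMoebius, hd, MulChar.map_nonunit _ (mt (ZMod.isUnit_iff_coprime d N).mp hd)]

theorem LSeriesHasSum_coprimeMoebius (N : ℕ) [NeZero N] {s : ℂ} (hs : 1 < s.re) :
    LSeriesHasSum (fun d ↦ (coprimeMoebius N d : ℂ)) s
      ((∏ q ∈ N.primeFactors, (1 - (q : ℂ) ^ (-s))) * riemannZeta s)⁻¹ := by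
  have hs1 : s ≠ 1 := by rintro rfl; simp at hs
  have hinv := DirichletCharacter.LSeries.mul_mu_eq_one (1 : DirichletCharacter ℂ N) hs
  rw [← DirichletCharacter.LFunction_eq_LSeries _ hs] at hinv
  have hsum := (DirichletCharacter.LSeriesSummable_mul (1 : DirichletCharacter ℂ N)
    (ArithmeticFunction.LSeriesSummable_moebius_iff.mpr hs)).LSeriesHasSum
  rw [eq_inv_of_mul_eq_one_right hinv, ← DirichletCharacter.LFunctionTrivChar,
    DirichletCharacter.LFunctionTrivChar_eq_mul_riemannZeta hs1,
    one_mul_moebius_eq_coprimeMoebius] at hsum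
  exact hsum

theorem hasSum_coprimeMoebius_div_pow (N : ℕ) [NeZero N] {k : ℕ} (hk : 1 < k) :
    HasSum (fun d : ℕ ↦ (coprimeMoebius N d : ℝ) / d ^ k)
      ((∏ q ∈ N.primeFactors, (1 - ((q : ℝ) ^ k)⁻¹)) * (riemannZeta k).re)⁻¹ := by
  have hk' : (1 : ℝ) < k := by exact_mod_cast hk
  have hζ : ((riemannZeta k).re : ℂ) = riemannZeta k :=
    Complex.ext rfl (by simpa using (riemannZeta_im_eq_zero_of_one_lt hk').symm)
  have hsum := LSeriesHasSum_coprimeMoebius N (s := k) (by simpa using hk')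
  rw [LSeriesHasSum] at hsum
  rw [← Complex.hasSum_ofReal]
  convert hsum using 2 with d
  · rw [LSeries.term_def₀ (by simp [coprimeMoebius]), Complex.cpow_neg, Complex.cpow_natCast]
    push_cast
    rw [div_eq_mul_inv]
  · push_cast
    simp only [hζ, Complex.cpow_neg, Complex.cpow_natCast]

theorem hasSum_coprimeMoebius_div_pow_of_prime {p : ℕ} (hp : p.Prime) {k : ℕ} (hk : 1 < k) :
    HasSum (fun d : ℕ ↦ (coprimeMoebius p d : ℝ) / d ^ k)
      ((p : ℝ) ^ k / ((p : ℝ) ^ k - 1) / (riemannZeta k).re) := by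
  have : NeZero p := ⟨hp.ne_zero⟩
  have hp0 : (p : ℝ) ^ k ≠ 0 := pow_ne_zero k (by exact_mod_cast hp.ne_zero)
  have hsum := hasSum_coprimeMoebius_div_pow p hk
  rwa [hp.primeFactors, prod_singleton, ← one_div ((p : ℝ) ^ k), one_sub_div hp0, mul_inv, inv_div,
    ← div_eq_mul_inv] at hsum

end Moebius

section Asymptotics

variable {p : ℕ} {t : ℝ}

theorem setOf_mem_efam_not_dvd_eq (p : ℕ) (ht : 0 ≤ t) :
    {AB ∈ Efam (t ^ 6) | ¬ (p : ℤ) ∣ 4 * AB.1 ^ 3 + 27 * AB.2 ^ 2} =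
      ({ab ∈ goodPairs p t | weightedGCD ab.1 ab.2 = 1} : Finset (ℤ × ℤ)) := by
  ext ⟨a, b⟩
  have hheight : ((max (|a| ^ 3) (b ^ 2) : ℤ) : ℝ) ≤ t ^ 6 ↔
      |(a : ℝ)| ≤ t ^ 2 ∧ |(b : ℝ)| ≤ t ^ 3 := by
    push_cast
    rw [max_le_iff, ← sq_abs (b : ℝ),
      ← pow_le_pow_iff_left₀ (abs_nonneg (a : ℝ)) (pow_nonneg ht 2) three_ne_zero,
      ← pow_le_pow_iff_left₀ (abs_nonneg (b : ℝ)) (pow_nonneg ht 3) two_ne_zero, ← pow_mul,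
      ← pow_mul]
  simp only [Efam, Set.mem_ofPred_eq, coe_filter, mem_goodPairs, hheight,
    condM_iff_weightedGCD_eq_one]
  constructor
  · rintro ⟨⟨-, hbox, hgcd⟩, hdvd⟩
    exact ⟨⟨hbox, hdvd⟩, hgcd⟩
  · rintro ⟨⟨hbox, hdvd⟩, hgcd⟩
    exact ⟨⟨fun h ↦ hdvd (h ▸ dvd_zero _), hbox, hgcd⟩, hdvd⟩

theorem hasSum_coprimeMoebius_mul_card_goodPairs (hp : p.Prime) (ht : 0 ≤ t) :
    HasSum (fun d : ℕ ↦ (coprimeMoebius p d : ℝ) * #(goodPairs p (t / d ^ 2)))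
      ({AB ∈ Efam (t ^ 6) | ¬ (p : ℤ) ∣ 4 * AB.1 ^ 3 + 27 * AB.2 ^ 2}.ncard : ℝ) := by
  have hsieve := hasSum_moebius_mul_card_filter_dvd (T := goodPairs p t)
    (g := fun ab ↦ weightedGCD ab.1 ab.2)
    fun ab hab h ↦ not_dvd_weightedGCD_of_mem_goodPairs hab (h ▸ dvd_zero p)
  rw [setOf_mem_efam_not_dvd_eq p ht, Set.ncard_coe_finset]
  refine hsieve.congr_fun fun d ↦ ?_
  by_cases hpd : p ∣ d
  · have hempty : ({ab ∈ goodPairs p t | d ∣ weightedGCD ab.1 ab.2} : Finset (ℤ × ℤ)) = ∅ :=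
      filter_false_of_mem fun ab hab h ↦
        not_dvd_weightedGCD_of_mem_goodPairs hab (hpd.trans h)
    simp [coprimeMoebius, Nat.coprime_comm, hp.coprime_iff_not_dvd, hpd, hempty]
  · simp [coprimeMoebius, Nat.coprime_comm, hp.coprime_iff_not_dvd, hpd,
      card_filter_dvd_weightedGCD_goodPairs hp hpd]

theorem abs_ncard_efam_sub_le (hp : p.Prime) (ht : 0 ≤ t) :
    |({AB ∈ Efam (t ^ 6) | ¬ (p : ℤ) ∣ 4 * AB.1 ^ 3 + 27 * AB.2 ^ 2}.ncard : ℝ) -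
      4 * (1 - 1 / p) * t ^ 5 * ((p : ℝ) ^ 10 / ((p : ℝ) ^ 10 - 1) / (riemannZeta 10).re)| ≤
        10 * p * t ^ 3 * ∑' d : ℕ, 1 / (d : ℝ) ^ 6 := by
  have hmain := (hasSum_coprimeMoebius_div_pow_of_prime hp (by norm_num : 1 < 10)).mul_left
    (4 * (1 - 1 / p) * t ^ 5)
  have hbound := (Real.summable_one_div_nat_pow.mpr (by norm_num : 1 < 6)).hasSum.mul_left
    (10 * p * t ^ 3)
  refine ((hasSum_coprimeMoebius_mul_card_goodPairs hp ht).sub hmain).norm_le_of_bounded hbound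
    fun d ↦ ?_
  calc _ = |(coprimeMoebius p d : ℝ)| *
        |(#(goodPairs p (t / d ^ 2)) : ℝ) - 4 * (1 - 1 / p) * (t / d ^ 2) ^ 5| := by
        rw [Real.norm_eq_abs, ← abs_mul]
        ring_nf
    _ ≤ 1 * (10 * p * (t / d ^ 2) ^ 3) := by
        gcongr
        · exact_mod_cast abs_coprimeMoebius_le_one p d
        · exact abs_card_goodPairs_sub_le hp (by positivity)
    _ = 10 * p * t ^ 3 * (1 / (d : ℝ) ^ 6) := by ring

end Asymptotics

theorem stmt_12_general :
    ∃ K : ℝ, 0 < K ∧ ∀ (p : ℕ), p.Prime → ∀ (X : ℝ), 0 ≤ X →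
      |({AB ∈ Efam X | ¬ (p : ℤ) ∣ (4 * AB.1 ^ 3 + 27 * AB.2 ^ 2)}.ncard : ℝ)
          - (((p : ℝ) ^ 2 - p) / (p : ℝ) ^ 2) * ((p : ℝ) ^ 10 / ((p : ℝ) ^ 10 - 1))
            * (4 / (riemannZeta 10).re) * X ^ ((5 : ℝ) / 6)|
        ≤ K * (p : ℝ) * X ^ ((1 : ℝ) / 2) := by
  have hpos : 0 < ∑' d : ℕ, 1 / (d : ℝ) ^ 6 :=
    (Real.summable_one_div_nat_pow.mpr (by norm_num)).tsum_pos (fun d ↦ by positivity) 1 (by simp)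
  refine ⟨10 * ∑' d : ℕ, 1 / (d : ℝ) ^ 6, by positivity, fun p hp X hX ↦ ?_⟩
  obtain ⟨t, ht, rfl⟩ : ∃ t : ℝ, 0 ≤ t ∧ t ^ 6 = X :=
    ⟨X ^ (1 / 6 : ℝ), by positivity, by rw [← Real.rpow_mul_natCast hX]; norm_num⟩
  have h56 : (t ^ 6) ^ (5 / 6 : ℝ) = t ^ 5 := by
    rw [← Real.rpow_natCast_mul ht, ← Real.rpow_natCast]; norm_num
  have h12 : (t ^ 6) ^ (1 / 2 : ℝ) = t ^ 3 := by
    rw [← Real.rpow_natCast_mul ht, ← Real.rpow_natCast]; norm_num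
  have hdensity : ((p : ℝ) ^ 2 - p) / (p : ℝ) ^ 2 = 1 - 1 / p := by
    have : (p : ℝ) ≠ 0 := by exact_mod_cast hp.ne_zero
    field_simp
  rw [h56, h12, hdensity]
  convert abs_ncard_efam_sub_le hp ht using 1 <;> ring_nf

theorem stmt_12 :
    ∃ K : ℝ, 0 < K ∧ ∀ (p : ℕ), p.Prime → 5 ≤ p → ∀ (X : ℝ), (p : ℝ) ^ 3 ≤ X →
      |({AB ∈ Efam X | ¬ (p : ℤ) ∣ (4 * AB.1 ^ 3 + 27 * AB.2 ^ 2)}.ncard : ℝ)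
          - (((p : ℝ) ^ 2 - p) / (p : ℝ) ^ 2) * ((p : ℝ) ^ 10 / ((p : ℝ) ^ 10 - 1))
            * (4 / (riemannZeta 10).re) * X ^ ((5 : ℝ) / 6)|
        ≤ K * (p : ℝ) * X ^ ((1 : ℝ) / 2) := by
  obtain ⟨K, hK, hbound⟩ := stmt_12_general
  exact ⟨K, hK, fun p hp _ X hX ↦ hbound p hp X ((by positivity : (0 : ℝ) ≤ p ^ 3).trans hX)⟩
end
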